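/- There exists a C^∞ diffeomorphism f of the 3-dimensional torus 𝕋³ = (ℝ/ℤ)³ (with its standard smooth manifold structure and normalized Haar measure Leb) such that the set of points x ∈ 𝕋³ satisfying both of the following has full Leb-measure: (1) the forward orbit {fⁿ(x) : n ≥ 0} is dense in 𝕋³; (2) the sequence of empirical measures e_n(x) := (1/n)·∑_{i=0}^{n-1} δ_{f^i(x)} does not converge in the weak topology on Borel probability measures of 𝕋³. In particular, f is transitive and admits no physical measure. -/

import Mathlib

/-! Let `f (w, y, z) = (λ w, κ y, φ_{c w} (z⁻¹))`, where `φ` is the north–south flow on the circle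
and `c` is a lacunary trigonometric series with frequencies `q k`. Since the flow commutes with
inversion, `fⁿ` moves the fibre point by the flow for time `Sₙ c w`, the Birkhoff sum of `c`, up to
an inversion for odd `n`.

The pair `(λ, κ)` is Liouville: `‖λ ^ q k - 1‖` is tiny compared with the `q k`-th coefficient of
`c`. Hence, for `n` in a window just below `1 / ‖λ ^ q k - 1‖`, the sum `Sₙ c w` is dominated by
its resonant term, which is huge and has the sign of `Re (w ^ q k)`. For almost every `w` this sign
takes both values infinitely often, so the averages of `Re z` along the orbit are infinitely often
at least `1 / 2` and infinitely often at most `-1 / 2`, and the empirical measures diverge.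

Along multiples of `q k` the base point hardly moves, while `Sₙ c w` travels towards `±∞` in small
steps. Together with the minimality of the rotation this makes `((λ, κ)ⁿ (w, y), Sₙ c w)` dense in
`𝕋² × ℝ` along each parity of `n`. As `φ` is transitive on the two half-circles off the real axis
and inversion exchanges them, almost every orbit of `f` is dense. -/

open MeasureTheory Filter Topology
open scoped ENNReal NNReal Manifold

noncomputable section

instance : MeasurableSpace Circle := borel Circle
instance : BorelSpace Circle := ⟨rfl⟩

/-- The 3-torus, realized as the product of three circles. -/
abbrev T3 : Type := Circle × Circle × Circle

/-- The model with corners for the 3-torus as a product of three 1-dimensional manifolds. -/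
abbrev modelT3 := (𝓡 1).prod ((𝓡 1).prod (𝓡 1))

/-- The normalized Haar (Lebesgue) probability measure on the 3-torus. -/
abbrev LebT3 : Measure T3 :=
  Measure.haarMeasure (⊤ : TopologicalSpace.PositiveCompacts T3)

/-- The `n`-th empirical measure of `x` under `f`, as a `Measure`. -/
def empMeasT3 (f : T3 → T3) (x : T3) (n : ℕ) : Measure T3 :=
  ((n : ℝ≥0∞))⁻¹ • ∑ i ∈ Finset.range n, Measure.dirac (f^[i] x)

lemma empMeasT3_isProbabilityMeasure (f : T3 → T3) (x : T3) {n : ℕ} (hn : n ≠ 0) :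
    IsProbabilityMeasure (empMeasT3 f x n) := by
  constructor
  simp only [empMeasT3, Measure.smul_apply, smul_eq_mul,
    Measure.finset_sum_apply, Measure.dirac_apply_of_mem (Set.mem_univ _),
    Finset.sum_const, Finset.card_range, nsmul_eq_mul, mul_one]
  exact ENNReal.inv_mul_cancel (by exact_mod_cast hn) (ENNReal.natCast_ne_top n)

/-- The `n`-th empirical measure of `x` under `f` as a Borel probability measure
(junk value `δ_x` for `n = 0`). -/
def empT3 (f : T3 → T3) (x : T3) (n : ℕ) : ProbabilityMeasure T3 :=
  if hn : n = 0 then ⟨Measure.dirac x, inferInstance⟩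
  else ⟨empMeasT3 f x n, empMeasT3_isProbabilityMeasure f x hn⟩

instance : Nontrivial Circle :=
  ⟨1, -1, fun h ↦ by have := congrArg ((↑) : Circle → ℂ) h; norm_num at this⟩

section Baire

theorem eventually_forall_exists_pow_eq {w : Circle} {U : Set Circle} (hU : U ∈ 𝓝 w) :
    ∀ᶠ n : ℕ in atTop, ∀ u : Circle, ∃ z ∈ U, z ^ n = u := by
  have hlim : Tendsto (fun θ : ℝ ↦ w * Circle.exp θ) (𝓝 0) (𝓝 w) := by
    have hcont : Continuous fun θ : ℝ ↦ w * Circle.exp θ := by fun_prop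
    simpa using hcont.tendsto 0
  obtain ⟨δ, hδ, hball⟩ := Metric.mem_nhds_iff.1 (hlim hU)
  filter_upwards [(tendsto_const_div_atTop_nhds_zero_nat Real.pi).eventually_lt_const hδ,
    eventually_gt_atTop 0] with n hn hn0 u
  have hn0' : (0 : ℝ) < n := mod_cast hn0
  set α := Complex.arg (u / w ^ n : Circle)
  refine ⟨w * Circle.exp (α / n), hball ?_, ?_⟩
  · rw [mem_ball_zero_iff, Real.norm_eq_abs, abs_div, abs_of_pos hn0']
    exact (div_le_div_of_nonneg_right (Complex.abs_arg_le_pi _) hn0'.le).trans_lt hn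
  · rw [mul_pow, ← Circle.exp_nsmul, nsmul_eq_mul, mul_div_cancel₀ _ hn0'.ne', Circle.exp_arg,
      mul_div_cancel]

theorem eventually_exists_pow_eq_prod {U : Set (Circle × Circle)} (hU : IsOpen U)
    (hne : U.Nonempty) : ∀ᶠ n : ℕ in atTop, ∀ u, ∃ p ∈ U, p ^ n = u := by
  obtain ⟨p, hp⟩ := hne
  obtain ⟨U₁, hU₁, U₂, hU₂, hsub⟩ := mem_nhds_prod_iff.1 (hU.mem_nhds hp)
  filter_upwards [eventually_forall_exists_pow_eq hU₁, eventually_forall_exists_pow_eq hU₂]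
    with n h₁ h₂ u
  obtain ⟨z₁, hz₁, hu₁⟩ := h₁ u.1
  obtain ⟨z₂, hz₂, hu₂⟩ := h₂ u.2
  exact ⟨(z₁, z₂), hsub ⟨hz₁, hz₂⟩, Prod.ext hu₁ hu₂⟩

theorem eventually_residual_exists_pow_mem {d : ℕ} (hd : 0 < d)
    {V : ℕ → Set (Circle × Circle)} (hV : ∀ n, IsOpen (V n))
    (hne : ∀ᶠ n in atTop, (V n).Nonempty) :
    ∀ᶠ p in residual (Circle × Circle), ∃ n, 0 < n ∧ d ∣ n ∧ p ^ n ∈ V n := by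
  refine residual_of_dense_open ?_ (dense_iff_inter_open.2 fun U hU hUne ↦ ?_)
  · have hunion : {p : Circle × Circle | ∃ n, 0 < n ∧ d ∣ n ∧ p ^ n ∈ V n} =
        ⋃ n, ⋃ (_ : 0 < n), ⋃ (_ : d ∣ n), (· ^ n) ⁻¹' V n := by
      ext; simp [and_left_comm]
    change IsOpen {p : Circle × Circle | ∃ n, 0 < n ∧ d ∣ n ∧ p ^ n ∈ V n}
    exact hunion ▸ isOpen_iUnion fun n ↦ isOpen_iUnion fun _ ↦ isOpen_iUnion fun _ ↦
      (hV n).preimage (continuous_pow n)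
  · have hmul : Tendsto (fun n ↦ d * n) atTop atTop := tendsto_id.const_mul_atTop' hd
    obtain ⟨n, ⟨hroot, u, hu⟩, hn⟩ :=
      ((hmul.eventually ((eventually_exists_pow_eq_prod hU hUne).and hne)).and
        (eventually_gt_atTop 0)).exists
    obtain ⟨p, hp, rfl⟩ := hroot u
    exact ⟨p, hp, d * n, Nat.mul_pos hd hn, dvd_mul_right _ _, hu⟩

theorem eventually_residual_denseRange_pow {d : ℕ} (hd : 0 < d) :
    ∀ᶠ p in residual (Circle × Circle), DenseRange fun n : ℕ ↦ p ^ (d * n) := by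
  have hbasis := TopologicalSpace.isBasis_countableBasis (Circle × Circle)
  have hV : ∀ᶠ p in residual (Circle × Circle),
      ∀ V ∈ TopologicalSpace.countableBasis (Circle × Circle), ∃ n, 0 < n ∧ d ∣ n ∧ p ^ n ∈ V :=
    (eventually_countable_ball (TopologicalSpace.countable_countableBasis _)).2 fun V hV ↦
      eventually_residual_exists_pow_mem hd
        (fun _ ↦ TopologicalSpace.isOpen_of_mem_countableBasis hV)
        (.of_forall fun _ ↦ TopologicalSpace.nonempty_of_mem_countableBasis hV)
  filter_upwards [hV] with p hp
  refine hbasis.dense_iff.2 fun V hV _ ↦ ?_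
  obtain ⟨_, -, ⟨m, rfl⟩, hm⟩ := hp V hV
  exact ⟨_, hm, m, rfl⟩

theorem exists_circle_norm_sub_one_lt {ε : ℝ} (hε : 0 < ε) :
    ∃ u : Circle, 0 < ‖(u : ℂ) - 1‖ ∧ ‖(u : ℂ) - 1‖ < ε := by
  obtain ⟨u, hne, hu⟩ := nonempty_of_mem
    (inter_mem_nhdsWithin ({1}ᶜ : Set Circle) (Metric.ball_mem_nhds 1 hε))
  exact ⟨u, norm_sub_pos_iff.2 (mt Circle.coe_eq_one.1 hne), by rwa [← dist_eq_norm]⟩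

theorem eventually_residual_exists_dvd_near_one {ε : ℕ → ℝ} (hε : ∀ n, 0 < n → 0 < ε n) :
    ∀ᶠ p in residual (Circle × Circle), ∀ d : ℕ, 0 < d → ∃ n, 0 < n ∧ d ∣ n ∧
      0 < ‖(p.1 : ℂ) ^ n - 1‖ ∧ ‖(p.1 : ℂ) ^ n - 1‖ < ε n ∧
      ‖(p.2 : ℂ) ^ n - 1‖ < ‖(p.1 : ℂ) ^ n - 1‖ := by
  refine eventually_countable_forall.2 fun d ↦ ?_
  rcases d.eq_zero_or_pos with rfl | hd
  · exact .of_forall fun p h ↦ absurd h (lt_irrefl 0)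
  let V (n : ℕ) : Set (Circle × Circle) :=
    {u | 0 < ‖(u.1 : ℂ) - 1‖ ∧ ‖(u.1 : ℂ) - 1‖ < ε n ∧ ‖(u.2 : ℂ) - 1‖ < ‖(u.1 : ℂ) - 1‖}
  have hV : ∀ n, IsOpen (V n) := fun n ↦
    .and (isOpen_lt (by fun_prop) (by fun_prop))
      (.and (isOpen_lt (by fun_prop) (by fun_prop)) (isOpen_lt (by fun_prop) (by fun_prop)))
  have hne : ∀ᶠ n in atTop, (V n).Nonempty := by
    filter_upwards [eventually_gt_atTop 0] with n hn
    obtain ⟨u, hu0, hu⟩ := exists_circle_norm_sub_one_lt (hε n hn)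
    exact ⟨(u, 1), hu0, hu, by simpa using hu0⟩
  filter_upwards [eventually_residual_exists_pow_mem hd hV hne] with p hp _
  simpa [V] using hp

end Baire

/-- The Fourier weight at frequency `q`: it decays fast enough for the resulting series to be
entire, which makes the cocycle built from it analytic. -/
def weight (q : ℕ) : ℝ := (2 ^ q * q.factorial : ℝ)⁻¹

theorem weight_pos (q : ℕ) : 0 < weight q := by unfold weight; positivity

theorem weight_le_of_add_le {a b j : ℕ} (h : a + j ≤ b) :
    weight b ≤ (1 / 2) ^ j * weight a := by
  have hfac : (a.factorial : ℝ) ≤ b.factorial :=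
    mod_cast Nat.factorial_le ((Nat.le_add_right a j).trans h)
  rw [weight, weight, one_div, inv_pow, ← mul_inv]
  refine inv_anti₀ (by positivity) ?_
  calc 2 ^ j * (2 ^ a * (a.factorial : ℝ)) = 2 ^ (a + j) * a.factorial := by ring
    _ ≤ 2 ^ b * b.factorial := by gcongr; norm_num

theorem mul_weight_le (q : ℕ) : q * weight q ≤ (1 / 2) ^ q := by
  have hfac : (q : ℝ) ≤ q.factorial := mod_cast Nat.self_le_factorial q
  rw [weight, one_div, inv_pow, mul_inv, mul_left_comm]
  refine mul_le_of_le_one_right (by positivity) ?_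
  rw [← div_eq_mul_inv]
  exact div_le_one_of_le₀ hfac (by positivity)

theorem weight_le_one (q : ℕ) : weight q ≤ 1 :=
  inv_le_one_of_one_le₀ (one_le_mul_of_one_le_of_one_le (one_le_pow₀ one_le_two)
    (mod_cast q.factorial_pos))

theorem weight_mul_pow_le (q : ℕ) {R : ℝ} (hR : 0 ≤ R) :
    weight q * R ^ q ≤ (1 / 2) ^ q * Real.exp R := by
  calc weight q * R ^ q = (1 / 2) ^ q * (R ^ q / q.factorial) := by
        rw [weight, one_div, inv_pow]; ring
    _ ≤ (1 / 2) ^ q * Real.exp R := by gcongr; exact Real.pow_div_factorial_le_exp R hR q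

/-- The rotation by `(lam, kap)` of the 2-torus is *fast* along the frequencies `q k`: its `q k`-th
iterates are within superexponentially small distance from the identity, the displacement in
the first coordinate dominating, and it is minimal even after squaring. -/
structure IsFastRotation (lam kap : Circle) (q : ℕ → ℕ) : Prop where
  even : ∀ k, Even (q k)
  dvd_succ : ∀ k, q k ∣ q (k + 1)
  norm_pos : ∀ k, 0 < ‖(lam : ℂ) ^ q k - 1‖
  norm_le : ∀ k, ‖(lam : ℂ) ^ q k - 1‖ ≤ weight (q k) / (1024 * q k)
  add_inv_le : ∀ k, q k + ‖(lam : ℂ) ^ q k - 1‖⁻¹ ≤ q (k + 1)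
  norm_snd_le : ∀ k, ‖(kap : ℂ) ^ q k - 1‖ ≤ ‖(lam : ℂ) ^ q k - 1‖
  denseRange : DenseRange fun n : ℕ ↦ (lam, kap) ^ (2 * n)

theorem exists_seq_of_forall_exists {α : Type*} {P : α → Prop} {R : α → α → Prop}
    (h₀ : ∃ a, P a) (h : ∀ a, P a → ∃ b, P b ∧ R a b) :
    ∃ u : ℕ → α, ∀ n, P (u n) ∧ R (u n) (u (n + 1)) := by
  obtain ⟨a, ha⟩ := h₀
  have : Nonempty α := ⟨a⟩
  choose! g hP hR using h
  have hPg : ∀ n, P (g^[n] a) := fun n ↦ by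
    induction n with
    | zero => exact ha
    | succ n ih => rw [Function.iterate_succ_apply']; exact hP _ ih
  refine ⟨fun n ↦ g^[n] a, fun n ↦ ⟨hPg n, ?_⟩⟩
  simpa only [Function.iterate_succ_apply'] using hR _ (hPg n)

theorem exists_isFastRotation : ∃ lam kap q, IsFastRotation lam kap q := by
  have hε : ∀ n : ℕ, 0 < n → 0 < weight n / (1024 * n) := fun n hn ↦ by
    have := weight_pos n
    positivity
  obtain ⟨⟨lam, kap⟩, hdense, hnear⟩ :=
    (dense_of_mem_residual ((eventually_residual_denseRange_pow two_pos).and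
      (eventually_residual_exists_dvd_near_one hε))).nonempty
  let Good (n : ℕ) : Prop := 0 < n ∧ Even n ∧ 0 < ‖(lam : ℂ) ^ n - 1‖ ∧
    ‖(lam : ℂ) ^ n - 1‖ ≤ weight n / (1024 * n) ∧ ‖(kap : ℂ) ^ n - 1‖ ≤ ‖(lam : ℂ) ^ n - 1‖
  have hgood : ∀ d : ℕ, 0 < d → ∃ n, Good n ∧ 2 * d ∣ n := fun d hd ↦ by
    obtain ⟨n, hn, hdvd, hpos, hlt, hsnd⟩ := hnear (2 * d) (by positivity)
    exact ⟨n, ⟨hn, even_iff_two_dvd.2 (dvd_of_mul_right_dvd hdvd), hpos, hlt.le, hsnd.le⟩, hdvd⟩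
  have hstep : ∀ n, Good n → ∃ m, Good m ∧ n ∣ m ∧ n + ‖(lam : ℂ) ^ n - 1‖⁻¹ ≤ m := by
    intro n hn
    obtain ⟨N, hN⟩ := exists_nat_ge (1 + ‖(lam : ℂ) ^ n - 1‖⁻¹)
    have hinv : 0 < ‖(lam : ℂ) ^ n - 1‖⁻¹ := inv_pos.2 hn.2.2.1
    have hN0 : 0 < N := by exact_mod_cast (by linarith : (0 : ℝ) < N)
    obtain ⟨m, hm, hdvd⟩ := hgood (n * N) (Nat.mul_pos hn.1 hN0)
    refine ⟨m, hm, dvd_of_mul_right_dvd (dvd_of_mul_left_dvd hdvd), ?_⟩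
    have hle : ((n * N : ℕ) : ℝ) ≤ m :=
      mod_cast Nat.le_of_dvd hm.1 (dvd_of_mul_left_dvd hdvd)
    have hn1 : (1 : ℝ) ≤ n := mod_cast hn.1
    push_cast at hle
    nlinarith
  obtain ⟨n₀, hn₀, -⟩ := hgood 1 one_pos
  obtain ⟨q, hq⟩ := exists_seq_of_forall_exists ⟨n₀, hn₀⟩ hstep
  exact ⟨lam, kap, q, fun k ↦ (hq k).1.2.1, fun k ↦ (hq k).2.1, fun k ↦ (hq k).1.2.2.1,
    fun k ↦ (hq k).1.2.2.2.1, fun k ↦ (hq k).2.2, fun k ↦ (hq k).1.2.2.2.2, hdense⟩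

section Recurrence

theorem surjective_pow_circle {n : ℕ} (hn : n ≠ 0) : Function.Surjective fun w : Circle ↦ w ^ n :=
  fun u ↦ ⟨Circle.exp (Complex.arg u / n), by
    have hn' : (n : ℝ) ≠ 0 := mod_cast hn
    simp only [← Circle.exp_nsmul, nsmul_eq_mul, mul_div_cancel₀ _ hn', Circle.exp_arg]⟩

theorem measurePreserving_pow_circle (μ : Measure Circle) [μ.IsHaarMeasure] {n : ℕ} (hn : n ≠ 0) :
    MeasurePreserving (fun w : Circle ↦ w ^ n) μ μ :=
  (powMonoidHom n : Circle →* Circle).measurePreserving (continuous_pow n)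
    (surjective_pow_circle hn) rfl

variable {q : ℕ → ℕ}

theorem dense_setOf_exists_pow_eq_one (hq : Tendsto q atTop atTop) :
    Dense {g : Circle | ∃ k, g ^ q k = 1} := by
  refine dense_iff_inter_open.2 fun U hU ⟨w, hw⟩ ↦ ?_
  obtain ⟨k, hk⟩ := (hq.eventually (eventually_forall_exists_pow_eq (hU.mem_nhds hw))).exists
  obtain ⟨g, hg, h1⟩ := hk 1
  exact ⟨g, hg, k, h1⟩

theorem frequently_mul_pow_mem_iff (hdvd : ∀ k, q k ∣ q (k + 1)) {g : Circle} {k : ℕ}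
    (hg : g ^ q k = 1) (w : Circle) (B : Set Circle) :
    (∃ᶠ j in atTop, (g * w) ^ q j ∈ B) ↔ ∃ᶠ j in atTop, w ^ q j ∈ B := by
  refine frequently_congr ?_
  filter_upwards [eventually_ge_atTop k] with j hj
  obtain ⟨m, hm⟩ : q k ∣ q j := Nat.le_induction dvd_rfl (fun n _ ih ↦ ih.trans (hdvd n)) j hj
  rw [mul_pow, hm, pow_mul g, hg, one_pow, one_mul]

theorem ae_frequently_pow_mem (hdvd : ∀ k, q k ∣ q (k + 1)) (hq : Tendsto q atTop atTop)
    (μ : Measure Circle) [μ.IsHaarMeasure] {B : Set Circle}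
    (hB : IsOpen B) (hne : B.Nonempty) : ∀ᵐ w ∂μ, ∃ᶠ k in atTop, w ^ q k ∈ B := by
  set E : Set Circle := {w | ∃ᶠ k in atTop, w ^ q k ∈ B} with hE
  have hA : ∀ k, MeasurableSet ((· ^ q k) ⁻¹' B : Set Circle) := fun k ↦
    (hB.preimage (continuous_pow _)).measurableSet
  have hEmeas : MeasurableSet E := by
    convert MeasurableSet.measurableSet_limsup hA using 1
    ext w
    simp [hE, mem_limsup_iff_frequently_mem]
  have hconst : EventuallyConst E (ae μ) := by
    refine aeconst_of_dense_setOfPred_preimage_smul_eq (M := Circle) hEmeas.nullMeasurableSet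
      ((dense_setOf_exists_pow_eq_one hq).mono ?_)
    rintro g ⟨k, hg⟩
    ext w
    exact frequently_mul_pow_mem_iff hdvd hg w B
  refine (eventuallyConst_set.1 hconst).resolve_right fun hnull ↦ ?_
  have hlim : Tendsto (fun k ↦ μ ((· ^ q k) ⁻¹' B)) atTop (𝓝 (μ ∅)) := by
    refine tendsto_measure_of_ae_tendsto_indicator_of_isFiniteMeasure atTop .empty hA ?_
    filter_upwards [hnull] with w hw
    simpa [hE, not_frequently] using hw
  have hlim' : Tendsto (fun k ↦ μ ((· ^ q k) ⁻¹' B)) atTop (𝓝 (μ B)) := by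
    refine tendsto_const_nhds.congr' ?_
    filter_upwards [hq.eventually_ne_atTop 0] with k hk
    exact ((measurePreserving_pow_circle μ hk).measure_preimage
      hB.measurableSet.nullMeasurableSet).symm
  exact (hB.measure_pos μ hne).ne' (by simpa using tendsto_nhds_unique hlim' hlim)

end Recurrence

section Cocycle

/-- The lacunary power series with frequencies `q k` and coefficients `weight (q k)`. -/
def lacunarySeries (q : ℕ → ℕ) (z : ℂ) : ℂ := ∑' k, weight (q k) * z ^ q k

/-- The function on the circle whose Birkhoff sums over the rotation by `lam` give the time the
fibre flow is run for. -/
def cocycle (q : ℕ → ℕ) (w : Circle) : ℝ := (lacunarySeries q w).re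

/-- The contribution of the frequency `q k` to the `n`-th Birkhoff sum of `cocycle q`
(before taking real parts). -/
def birkhoffTerm (lam : Circle) (q : ℕ → ℕ) (n : ℕ) (w : Circle) (k : ℕ) : ℂ :=
  weight (q k) * (w : ℂ) ^ q k * ∑ i ∈ Finset.range n, ((lam : ℂ) ^ q k) ^ i

theorem differentiable_lacunarySeries {q : ℕ → ℕ} (hq : StrictMono q) :
    Differentiable ℂ (lacunarySeries q) := by
  intro z
  have hball : z ∈ Metric.ball (0 : ℂ) (‖z‖ + 1) := by simp
  refine (Complex.differentiableOn_tsum_of_summable_norm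
    (u := fun k ↦ (1 / 2 : ℝ) ^ k * Real.exp (‖z‖ + 1))
    (summable_geometric_two.mul_right _) (fun k ↦ by fun_prop) Metric.isOpen_ball
    fun k x hx ↦ ?_).differentiableAt (Metric.isOpen_ball.mem_nhds hball)
  have hx' : ‖x‖ ≤ ‖z‖ + 1 := (mem_ball_zero_iff.1 hx).le
  rw [norm_mul, norm_pow, Complex.norm_of_nonneg (weight_pos _).le]
  calc weight (q k) * ‖x‖ ^ q k ≤ weight (q k) * (‖z‖ + 1) ^ q k := by
        gcongr; exact (weight_pos _).le
    _ ≤ (1 / 2) ^ q k * Real.exp (‖z‖ + 1) := weight_mul_pow_le _ (by positivity)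
    _ ≤ (1 / 2) ^ k * Real.exp (‖z‖ + 1) := by
        gcongr ?_ * _
        exact pow_le_pow_of_le_one (by norm_num) (by norm_num) hq.le_apply

theorem norm_pow_sub_one_le {z : ℂ} (hz : ‖z‖ = 1) (n : ℕ) : ‖z ^ n - 1‖ ≤ n * ‖z - 1‖ := by
  rw [← geom_sum_mul, norm_mul]
  gcongr
  exact (norm_sum_le _ _).trans (by simp [hz])

section
variable {q : ℕ → ℕ} (hq : StrictMono q)
include hq

theorem weight_comp_add_le (m k : ℕ) : weight (q (k + m)) ≤ (1 / 2) ^ k * weight (q m) :=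
  weight_le_of_add_le (by rw [add_comm]; exact hq.add_le_nat k m)

theorem norm_birkhoffTerm_add_le (lam : Circle) (n : ℕ) (w : Circle) (m k : ℕ) :
    ‖birkhoffTerm lam q n w (k + m)‖ ≤ (1 / 2) ^ k * (n * weight (q m)) := by
  have hgeom : ‖∑ i ∈ Finset.range n, ((lam : ℂ) ^ q (k + m)) ^ i‖ ≤ n :=
    (norm_sum_le _ _).trans (by simp [Circle.norm_coe])
  calc ‖birkhoffTerm lam q n w (k + m)‖
      = weight (q (k + m)) * ‖∑ i ∈ Finset.range n, ((lam : ℂ) ^ q (k + m)) ^ i‖ := by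
        simp [birkhoffTerm, abs_of_pos (weight_pos _), Circle.norm_coe]
    _ ≤ ((1 / 2) ^ k * weight (q m)) * n := by
        gcongr
        · exact mul_nonneg (by positivity) (weight_pos _).le
        · exact weight_comp_add_le hq m k
    _ = (1 / 2) ^ k * (n * weight (q m)) := by ring

theorem summable_birkhoffTerm (lam : Circle) (n : ℕ) (w : Circle) :
    Summable (birkhoffTerm lam q n w) :=
  .of_norm_bounded (summable_geometric_two.mul_right _) (norm_birkhoffTerm_add_le hq lam n w 0)

theorem birkhoffSum_cocycle_eq (lam : Circle) (n : ℕ) (w : Circle) :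
    birkhoffSum (lam * ·) (cocycle q) n w = (∑' k, birkhoffTerm lam q n w k).re := by
  have hsum : ∀ u : Circle, Summable fun k ↦ (weight (q k) : ℂ) * (u : ℂ) ^ q k := fun u ↦ by
    refine (summable_birkhoffTerm hq lam 1 u).congr fun k ↦ by simp [birkhoffTerm]
  have hterm : ∀ k, birkhoffTerm lam q n w k =
      ∑ i ∈ Finset.range n, weight (q k) * ((lam ^ i * w : Circle) : ℂ) ^ q k := fun k ↦ by
    rw [birkhoffTerm, Finset.mul_sum]
    exact Finset.sum_congr rfl fun _ _ ↦ by push_cast; ring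
  simp only [hterm, Summable.tsum_finsetSum fun _ _ ↦ hsum _, Complex.re_sum, birkhoffSum,
    mul_left_iterate, cocycle, lacunarySeries]

theorem norm_birkhoffTail_le (lam : Circle) {n m : ℕ} (hn : n ≤ q m) (w : Circle) :
    ‖∑' k, birkhoffTerm lam q n w (k + m)‖ ≤ 2 * (1 / 2) ^ q m := by
  refine tsum_of_norm_bounded (hasSum_geometric_two.mul_right _) fun k ↦
    (norm_birkhoffTerm_add_le hq lam n w m k).trans ?_
  gcongr
  calc n * weight (q m) ≤ q m * weight (q m) := by gcongr; exact (weight_pos _).le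
    _ ≤ (1 / 2) ^ q m := mul_weight_le _

end

theorem le_re_birkhoffTerm (lam : Circle) (q : ℕ → ℕ) {σ : ℝ} (hσ : |σ| ≤ 1) {k n : ℕ} {w : Circle}
    (hw : 1 / 2 ≤ σ * ((w : ℂ) ^ q k).re) (hn : 4 * n * ‖(lam : ℂ) ^ q k - 1‖ ≤ 1) :
    weight (q k) * n / 4 ≤ σ * (birkhoffTerm lam q n w k).re := by
  set ζ := (lam : ℂ) ^ q k with hζ
  set G := ∑ i ∈ Finset.range n, ζ ^ i with hG
  have hGn : ‖G - n‖ ≤ n / 4 := by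
    have hterm : ∀ i ∈ Finset.range n, ‖ζ ^ i - 1‖ ≤ 1 / 4 := fun i hi ↦ by
      have hin : (i : ℝ) ≤ n := mod_cast (Finset.mem_range.1 hi).le
      have := norm_pow_sub_one_le (z := ζ) (by simp [hζ, Circle.norm_coe]) i
      nlinarith [norm_nonneg (ζ - 1)]
    have hsub : G - n = ∑ i ∈ Finset.range n, (ζ ^ i - 1) := by simp [hG]
    rw [hsub]
    exact (norm_sum_le_of_le _ hterm).trans_eq (by simp [div_eq_mul_inv])
  have hre : |σ * ((w : ℂ) ^ q k * (G - n)).re| ≤ n / 4 := by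
    refine (abs_mul _ _).trans_le ((mul_le_of_le_one_left (abs_nonneg _) hσ).trans ?_)
    refine (Complex.abs_re_le_norm _).trans (le_trans (le_of_eq ?_) hGn)
    simp [Circle.norm_coe]
  have hsplit : σ * (birkhoffTerm lam q n w k).re = weight (q k) *
      (n * (σ * ((w : ℂ) ^ q k).re) + σ * ((w : ℂ) ^ q k * (G - n)).re) := by
    rw [birkhoffTerm, mul_assoc, Complex.re_ofReal_mul, ← hζ, ← hG]
    simp only [Complex.mul_re, Complex.sub_re, Complex.natCast_re, Complex.sub_im,
      Complex.natCast_im, sub_zero]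
    ring
  rw [hsplit, mul_div_assoc]
  gcongr
  · exact (weight_pos _).le
  · nlinarith [neg_le_of_abs_le hre, n.cast_nonneg (α := ℝ)]

namespace IsFastRotation

variable {lam kap : Circle} {q : ℕ → ℕ} (h : IsFastRotation lam kap q)
include h

theorem pos (k : ℕ) : 0 < q k :=
  Nat.pos_of_ne_zero fun hk ↦ by simpa [hk] using h.norm_pos k

theorem strictMono : StrictMono q := strictMono_nat_of_lt_succ fun k ↦ by
  have hpos := inv_pos.2 (h.norm_pos k)
  exact_mod_cast (by linarith [h.add_inv_le k] : (q k : ℝ) < q (k + 1))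

theorem norm_pow_mul_norm_le (k : ℕ) : 1024 * q k * ‖(lam : ℂ) ^ q k - 1‖ ≤ weight (q k) := by
  have hq : (0 : ℝ) < q k := mod_cast h.pos k
  have := (le_div_iff₀ (by positivity)).1 (h.norm_le k)
  linarith

theorem sum_inv_norm_le (m : ℕ) :
    ∑ k ∈ Finset.range m, ‖(lam : ℂ) ^ q k - 1‖⁻¹ ≤ q m := by
  induction m with
  | zero => simp
  | succ m ih => rw [Finset.sum_range_succ]; exact (by gcongr : _ ≤ _).trans (h.add_inv_le m)

theorem norm_birkhoffHead_le {n m : ℕ} {D : ℝ} (hD0 : 0 ≤ D)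
    (hD : ∀ k < m, ‖((lam : ℂ) ^ q k) ^ n - 1‖ ≤ D) (w : Circle) :
    ‖∑ k ∈ Finset.range m, birkhoffTerm lam q n w k‖ ≤ D * q m := by
  have hterm : ∀ k < m, ‖birkhoffTerm lam q n w k‖ ≤ D * ‖(lam : ℂ) ^ q k - 1‖⁻¹ := fun k hk ↦ by
    have hgeom : ‖∑ i ∈ Finset.range n, ((lam : ℂ) ^ q k) ^ i‖ ≤ D * ‖(lam : ℂ) ^ q k - 1‖⁻¹ := by
      rw [← div_eq_mul_inv, le_div_iff₀ (h.norm_pos k), ← norm_mul, geom_sum_mul]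
      exact hD k hk
    calc ‖birkhoffTerm lam q n w k‖
        = weight (q k) * ‖∑ i ∈ Finset.range n, ((lam : ℂ) ^ q k) ^ i‖ := by
          simp [birkhoffTerm, abs_of_pos (weight_pos _), Circle.norm_coe]
      _ ≤ D * ‖(lam : ℂ) ^ q k - 1‖⁻¹ :=
          (mul_le_of_le_one_left (norm_nonneg _) (weight_le_one _)).trans hgeom
  calc ‖∑ k ∈ Finset.range m, birkhoffTerm lam q n w k‖
      ≤ ∑ k ∈ Finset.range m, D * ‖(lam : ℂ) ^ q k - 1‖⁻¹ :=
        norm_sum_le_of_le _ fun k hk ↦ hterm k (Finset.mem_range.1 hk)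
    _ ≤ D * q m := by
        rw [← Finset.mul_sum]
        exact mul_le_mul_of_nonneg_left (h.sum_inv_norm_le m) hD0

theorem abs_birkhoffSum_period_le (k : ℕ) (w : Circle) :
    |birkhoffSum (lam * ·) (cocycle q) (q k) w| ≤ 3 * (1 / 2) ^ q k := by
  have hhead : ‖∑ j ∈ Finset.range k, birkhoffTerm lam q (q k) w j‖ ≤
      q k * ‖(lam : ℂ) ^ q k - 1‖ * q k := by
    refine h.norm_birkhoffHead_le (by positivity) (fun j hj ↦ ?_) w
    rw [pow_right_comm]
    refine (norm_pow_sub_one_le (by simp [Circle.norm_coe]) (q j)).trans ?_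
    gcongr
    exact h.strictMono.monotone hj.le
  have hsmall : q k * ‖(lam : ℂ) ^ q k - 1‖ * q k ≤ (1 / 2) ^ q k := by
    refine le_trans ?_ (mul_weight_le (q k))
    rw [mul_comm]
    gcongr
    linarith [h.norm_pow_mul_norm_le k, mul_nonneg (q k).cast_nonneg (h.norm_pos k).le]
  rw [birkhoffSum_cocycle_eq h.strictMono,
    ← (summable_birkhoffTerm h.strictMono lam (q k) w).sum_add_tsum_nat_add k]
  refine (Complex.abs_re_le_norm _).trans ((norm_add_le _ _).trans ?_)
  linarith [norm_birkhoffTail_le h.strictMono lam (le_refl (q k)) w]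

theorem abs_birkhoffSum_sub_re_le {n k : ℕ} (hn : n ≤ q (k + 1)) (w : Circle) :
    |birkhoffSum (lam * ·) (cocycle q) n w - (birkhoffTerm lam q n w k).re| ≤ 2 * q k + 1 := by
  have hhead : ‖∑ j ∈ Finset.range k, birkhoffTerm lam q n w j‖ ≤ 2 * q k := by
    refine h.norm_birkhoffHead_le zero_le_two (fun j _ ↦ (norm_sub_le _ _).trans_eq ?_) w
    norm_num [Circle.norm_coe]
  have htail := norm_birkhoffTail_le h.strictMono lam hn w
  have hpow : (1 / 2 : ℝ) ^ q (k + 1) ≤ 1 / 2 :=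
    pow_le_of_le_one (by norm_num) (by norm_num) (h.pos _).ne'
  rw [birkhoffSum_cocycle_eq h.strictMono, ← Complex.sub_re,
    ← (summable_birkhoffTerm h.strictMono lam n w).sum_add_tsum_nat_add (k + 1),
    Finset.sum_range_succ, add_right_comm, add_sub_cancel_right]
  refine (Complex.abs_re_le_norm _).trans ((norm_add_le _ _).trans ?_)
  linarith

theorem le_mul_birkhoffSum {σ : ℝ} (hσ : |σ| ≤ 1) {k n : ℕ} {w : Circle}
    (hw : 1 / 2 ≤ σ * ((w : ℂ) ^ q k).re)
    (hn : 1 ≤ 64 * n * ‖(lam : ℂ) ^ q k - 1‖) (hn' : 4 * n * ‖(lam : ℂ) ^ q k - 1‖ ≤ 1) :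
    q k ≤ σ * birkhoffSum (lam * ·) (cocycle q) n w := by
  have hρ := h.norm_pos k
  have hq : (1 : ℝ) ≤ q k := mod_cast h.pos k
  have hnq : n ≤ q (k + 1) := by
    have hninv : n ≤ ‖(lam : ℂ) ^ q k - 1‖⁻¹ := by
      rw [← one_div, le_div_iff₀ hρ]
      nlinarith [n.cast_nonneg (α := ℝ)]
    exact_mod_cast (by linarith [h.add_inv_le k] : (n : ℝ) ≤ q (k + 1))
  have hmain : 4 * (q k : ℝ) ≤ weight (q k) * n / 4 := by
    calc 4 * (q k : ℝ) ≤ 4 * q k * (64 * n * ‖(lam : ℂ) ^ q k - 1‖) :=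
          le_mul_of_one_le_right (by positivity) hn
      _ = 1024 * q k * ‖(lam : ℂ) ^ q k - 1‖ * n / 4 := by ring
      _ ≤ weight (q k) * n / 4 := by gcongr; exact h.norm_pow_mul_norm_le k
  have hrest : |σ * (birkhoffSum (lam * ·) (cocycle q) n w - (birkhoffTerm lam q n w k).re)| ≤
      2 * q k + 1 :=
    (abs_mul _ _).trans_le ((mul_le_of_le_one_left (abs_nonneg _) hσ).trans
      (h.abs_birkhoffSum_sub_re_le hnq w))
  linarith [le_re_birkhoffTerm lam q hσ hw hn', neg_le_of_abs_le hrest]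

end IsFastRotation

end Cocycle

section NorthSouth

theorem abs_re_circle_le_one (z : Circle) : |(z : ℂ).re| ≤ 1 :=
  (Complex.abs_re_le_norm _).trans_eq z.norm_coe

theorem re_sq_add_im_sq_circle (z : Circle) : (z : ℂ).re ^ 2 + (z : ℂ).im ^ 2 = 1 := by
  rw [← Complex.sq_norm_sub_sq_re (z : ℂ)]; simp [Circle.norm_coe]

theorem circle_ext_re {z z' : Circle} (hre : (z : ℂ).re = (z' : ℂ).re)
    (him : 0 < (z : ℂ).im * (z' : ℂ).im) : z = z' := by
  have hsq : (z : ℂ).im ^ 2 = (z' : ℂ).im ^ 2 := by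
    have h := re_sq_add_im_sq_circle z
    rw [hre] at h
    linarith [re_sq_add_im_sq_circle z']
  refine Circle.ext (Complex.ext hre
    ((sq_eq_sq_iff_eq_or_eq_neg.1 hsq).resolve_right fun hneg ↦ ?_))
  rw [hneg] at him
  nlinarith [sq_nonneg (z' : ℂ).im]

theorem re_circle_mem_Ioo {z : Circle} (hz : (z : ℂ).im ≠ 0) : (z : ℂ).re ∈ Set.Ioo (-1) 1 := by
  have him : 0 < (z : ℂ).im ^ 2 := by positivity
  rw [Set.mem_Ioo, ← abs_lt, ← sq_lt_one_iff_abs_lt_one]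
  linarith [re_sq_add_im_sq_circle z]

theorem cosh_add_mul_sinh_pos {x : ℝ} (hx : |x| ≤ 1) (t : ℝ) :
    0 < Real.cosh t + x * Real.sinh t := by
  have hlt : |x * Real.sinh t| < Real.cosh t := by
    rw [abs_mul, Real.abs_sinh, ← Real.cosh_abs]
    exact (mul_le_of_le_one_left (Real.sinh_nonneg_iff.2 (abs_nonneg t)) hx).trans_lt
      (Real.sinh_lt_cosh _)
  linarith [neg_lt_of_abs_lt hlt]

/-- The north–south flow on the circle, repelled from `-1` and attracted to `1`: the boost of
rapidity `t` on `ℝ³`, acting on the projectivized light cone, whose points are `[1 : x : y]` with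
`x² + y² = 1`. -/
def northSouth (t : ℝ) (z : Circle) : Circle :=
  ⟨⟨((z : ℂ).re * Real.cosh t + Real.sinh t) / (Real.cosh t + (z : ℂ).re * Real.sinh t),
    (z : ℂ).im / (Real.cosh t + (z : ℂ).re * Real.sinh t)⟩, by
    have hpos := cosh_add_mul_sinh_pos (abs_re_circle_le_one z) t
    refine mem_sphere_zero_iff_norm.2 ?_
    rw [← pow_eq_one_iff_of_nonneg (norm_nonneg _) two_ne_zero, Complex.sq_norm,
      Complex.normSq_mk, ← pow_two, ← pow_two, div_pow, div_pow, ← add_div,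
      div_eq_one_iff_eq (by positivity)]
    linear_combination re_sq_add_im_sq_circle z + ((z : ℂ).re ^ 2 - 1) * Real.cosh_sq t⟩

theorem northSouth_re (t : ℝ) (z : Circle) : (northSouth t z : ℂ).re =
    ((z : ℂ).re * Real.cosh t + Real.sinh t) / (Real.cosh t + (z : ℂ).re * Real.sinh t) := rfl

theorem northSouth_im (t : ℝ) (z : Circle) : (northSouth t z : ℂ).im =
    (z : ℂ).im / (Real.cosh t + (z : ℂ).re * Real.sinh t) := rfl

theorem northSouth_zero (z : Circle) : northSouth 0 z = z :=
  Circle.ext (Complex.ext (by simp [northSouth_re]) (by simp [northSouth_im]))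

theorem northSouth_inv (t : ℝ) (z : Circle) : northSouth t z⁻¹ = (northSouth t z)⁻¹ := by
  refine Circle.ext (Complex.ext ?_ ?_) <;> simp [northSouth_re, northSouth_im, neg_div]

theorem northSouth_add (s t : ℝ) (z : Circle) :
    northSouth (s + t) z = northSouth s (northSouth t z) := by
  have ht := (cosh_add_mul_sinh_pos (abs_re_circle_le_one z) t).ne'
  have hst := (cosh_add_mul_sinh_pos (abs_re_circle_le_one z) (s + t)).ne'
  have hs := (cosh_add_mul_sinh_pos (abs_re_circle_le_one (northSouth t z)) s).ne'
  have hprod : Real.cosh (s + t) + (z : ℂ).re * Real.sinh (s + t) =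
      (Real.cosh s + (northSouth t z : ℂ).re * Real.sinh s) *
        (Real.cosh t + (z : ℂ).re * Real.sinh t) := by
    rw [northSouth_re, add_mul, mul_right_comm, div_mul_cancel₀ _ ht, Real.cosh_add, Real.sinh_add]
    ring
  refine Circle.ext (Complex.ext ?_ ?_)
  · rw [northSouth_re, northSouth_re s, div_eq_div_iff hst hs, hprod, northSouth_re t]
    rw [northSouth_re] at hs
    rw [Real.cosh_add, Real.sinh_add]
    field_simp
    ring
  · rw [northSouth_im, northSouth_im s, northSouth_im t, div_div, hprod, mul_comm]

theorem northSouth_im_mul_im_pos (t : ℝ) {z : Circle} (hz : (z : ℂ).im ≠ 0) :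
    0 < (northSouth t z : ℂ).im * (z : ℂ).im := by
  rw [northSouth_im, div_mul_eq_mul_div]
  exact div_pos (mul_self_pos.2 hz) (cosh_add_mul_sinh_pos (abs_re_circle_le_one z) t)

theorem northSouth_re_eq_tanh (t : ℝ) {z : Circle} (hz : (z : ℂ).im ≠ 0) :
    (northSouth t z : ℂ).re = Real.tanh (Real.artanh (z : ℂ).re + t) := by
  set u := Real.artanh (z : ℂ).re with hu
  have hz' : (z : ℂ).re = Real.sinh u / Real.cosh u := by
    rw [← Real.tanh_eq_sinh_div_cosh, hu, Real.tanh_artanh (re_circle_mem_Ioo hz)]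
  have hpos := cosh_add_mul_sinh_pos (abs_re_circle_le_one z) t
  have hc := (Real.cosh_pos u).ne'
  have hc' := (Real.cosh_pos (u + t)).ne'
  rw [northSouth_re, Real.tanh_eq_sinh_div_cosh, div_eq_div_iff hpos.ne' hc', hz', Real.cosh_add,
    Real.sinh_add]
  field_simp

theorem exists_northSouth_eq {z z' : Circle} (h : 0 < (z : ℂ).im * (z' : ℂ).im) :
    ∃ t, northSouth t z = z' := by
  have hz : (z : ℂ).im ≠ 0 := left_ne_zero_of_mul h.ne'
  have hz' : (z' : ℂ).im ≠ 0 := right_ne_zero_of_mul h.ne'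
  refine ⟨Real.artanh (z' : ℂ).re - Real.artanh (z : ℂ).re, circle_ext_re ?_ ?_⟩
  · rw [northSouth_re_eq_tanh _ hz, add_sub_cancel, Real.tanh_artanh (re_circle_mem_Ioo hz')]
  · refine pos_of_mul_pos_left ?_ (sq_nonneg (z : ℂ).im)
    calc 0 < _ := mul_pos (northSouth_im_mul_im_pos _ hz) h
      _ = _ := by ring

theorem exists_forall_le_mul_northSouth_re {z : Circle} (hz : (z : ℂ).im ≠ 0) {σ r : ℝ}
    (hσ : σ = 1 ∨ σ = -1) (hr : r ∈ Set.Ioo (-1) 1) :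
    ∃ T : ℝ, ∀ t, T ≤ σ * t → r ≤ σ * (northSouth t z : ℂ).re := by
  refine ⟨Real.artanh r - σ * Real.artanh (z : ℂ).re, fun t ht ↦ ?_⟩
  have htanh : σ * (northSouth t z : ℂ).re =
      Real.tanh (σ * Real.artanh (z : ℂ).re + σ * t) := by
    rw [northSouth_re_eq_tanh t hz]
    rcases hσ with rfl | rfl
    · simp only [one_mul]
    · simp only [neg_one_mul, ← neg_add, Real.tanh_neg]
  rw [htanh, ← Real.artanh_le_artanh_iff hr (Real.tanh_bijOn.mapsTo trivial), Real.artanh_tanh]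
  linarith

theorem contMDiff_northSouth {E H M : Type*} [NormedAddCommGroup E] [NormedSpace ℝ E]
    [TopologicalSpace H] {I : ModelWithCorners ℝ E H} [TopologicalSpace M] [ChartedSpace H M]
    {n : WithTop ℕ∞} [IsManifold I n M] {g : M → ℝ} {h : M → Circle} (hg : ContMDiff I 𝓘(ℝ) n g)
    (hh : ContMDiff I (𝓡 1) n h) : ContMDiff I (𝓡 1) n fun p ↦ northSouth (g p) (h p) := by
  have := Complex.finrank_real_complex_fact
  have hcoe : ContMDiff I 𝓘(ℝ, ℂ) n fun p ↦ (h p : ℂ) := contMDiff_coe_sphere.comp hh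
  have hre : ContMDiff I 𝓘(ℝ) n fun p ↦ (h p : ℂ).re :=
    Complex.reCLM.contDiff.contMDiff.comp hcoe
  have him : ContMDiff I 𝓘(ℝ) n fun p ↦ (h p : ℂ).im :=
    Complex.imCLM.contDiff.contMDiff.comp hcoe
  have hcosh := Real.contDiff_cosh.contMDiff.comp hg
  have hsinh := Real.contDiff_sinh.contMDiff.comp hg
  have hden := hcosh.add (hre.mul hsinh)
  have hpos : ∀ p, Real.cosh (g p) + (h p : ℂ).re * Real.sinh (g p) ≠ 0 := fun p ↦
    (cosh_add_mul_sinh_pos (abs_re_circle_le_one _) _).ne'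
  refine ContMDiff.codRestrict_sphere ?_ _
  exact Complex.equivRealProdCLM.symm.contDiff.contMDiff.comp
    ((((hre.mul hcosh).add hsinh).div₀ hden hpos).prodMk_space (him.div₀ hden hpos))

end NorthSouth

section SkewProduct

variable {lam kap : Circle} {q : ℕ → ℕ}

theorem contMDiff_cocycle (hq : StrictMono q) {n : WithTop ℕ∞} :
    ContMDiff (𝓡 1) 𝓘(ℝ) n (cocycle q) := by
  have := Complex.finrank_real_complex_fact
  have hseries : ContDiff ℝ n (lacunarySeries q) :=
    (differentiable_lacunarySeries hq).contDiff.restrict_scalars ℝ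
  exact (Complex.reCLM.contDiff.comp hseries).contMDiff.comp contMDiff_coe_sphere

/-- The skew product over the rotation by `(lam, kap)` which inverts the fibre circle and then runs
the north–south flow on it for time `cocycle q w`. -/
def skewProduct (lam kap : Circle) (q : ℕ → ℕ) (x : T3) : T3 :=
  (lam * x.1, kap * x.2.1, northSouth (cocycle q x.1) x.2.2⁻¹)

/-- The inverse of `skewProduct lam kap q`. -/
def skewProductInv (lam kap : Circle) (q : ℕ → ℕ) (x : T3) : T3 :=
  (lam⁻¹ * x.1, kap⁻¹ * x.2.1, (northSouth (-cocycle q (lam⁻¹ * x.1)) x.2.2)⁻¹)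

theorem skewProduct_iterate (n : ℕ) (w y z : Circle) :
    (skewProduct lam kap q)^[n] (w, y, z) = (lam ^ n * w, kap ^ n * y,
      northSouth (birkhoffSum (lam * ·) (cocycle q) n w) (z ^ (-1 : ℤ) ^ n)) := by
  induction n with
  | zero => simp [northSouth_zero]
  | succ n ih =>
    rw [Function.iterate_succ_apply', ih, skewProduct, birkhoffSum_succ, mul_left_iterate,
      ← northSouth_inv, ← northSouth_add, add_comm]
    simp [pow_succ', mul_assoc]

theorem contMDiff_skewProduct (hq : StrictMono q) {n : WithTop ℕ∞} :
    ContMDiff modelT3 modelT3 n (skewProduct lam kap q) := by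
  have hw : ContMDiff modelT3 (𝓡 1) n fun x : T3 ↦ x.1 := contMDiff_fst
  have hy : ContMDiff modelT3 (𝓡 1) n fun x : T3 ↦ x.2.1 := contMDiff_snd.fst
  have hz : ContMDiff modelT3 (𝓡 1) n fun x : T3 ↦ x.2.2 := contMDiff_snd.snd
  exact (contMDiff_const.mul hw).prodMk ((contMDiff_const.mul hy).prodMk
    (contMDiff_northSouth ((contMDiff_cocycle hq).comp hw) hz.inv))

theorem contMDiff_skewProductInv (hq : StrictMono q) {n : WithTop ℕ∞} :
    ContMDiff modelT3 modelT3 n (skewProductInv lam kap q) := by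
  have hw : ContMDiff modelT3 (𝓡 1) n fun x : T3 ↦ x.1 := contMDiff_fst
  have hy : ContMDiff modelT3 (𝓡 1) n fun x : T3 ↦ x.2.1 := contMDiff_snd.fst
  have hz : ContMDiff modelT3 (𝓡 1) n fun x : T3 ↦ x.2.2 := contMDiff_snd.snd
  have hcoc : ContMDiff modelT3 𝓘(ℝ) n fun x : T3 ↦ -cocycle q (lam⁻¹ * x.1) :=
    ((contMDiff_cocycle hq).comp (contMDiff_const.mul hw)).neg
  exact (contMDiff_const.mul hw).prodMk ((contMDiff_const.mul hy).prodMk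
    (contMDiff_northSouth hcoc hz).inv)

/-- `skewProduct lam kap q` as a diffeomorphism of the 3-torus. -/
def skewProductDiffeomorph (lam kap : Circle) (hq : StrictMono q) (n : WithTop ℕ∞) :
    Diffeomorph modelT3 modelT3 T3 T3 n where
  toFun := skewProduct lam kap q
  invFun := skewProductInv lam kap q
  left_inv x := by simp [skewProduct, skewProductInv, ← northSouth_add, northSouth_zero]
  right_inv x := by simp [skewProduct, skewProductInv, ← northSouth_add, northSouth_zero]
  contMDiff_toFun := contMDiff_skewProduct hq
  contMDiff_invFun := contMDiff_skewProductInv hq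

end SkewProduct

section Average

theorem half_le_average {a : ℕ → ℝ} {N : ℕ} (hN : 56 ≤ N) (ha : ∀ i, -1 ≤ a i)
    (ha' : ∀ i < N, N < 8 * i → 3 / 4 ≤ a i) :
    1 / 2 ≤ (N : ℝ)⁻¹ * ∑ i ∈ Finset.range N, a i := by
  have hN' : (56 : ℝ) ≤ N := mod_cast hN
  have hm : ((N / 8 : ℕ) : ℝ) ≤ N / 8 := Nat.cast_div_le
  have hhead : ((N / 8 + 1 : ℕ) : ℝ) * (-1) ≤ ∑ i ∈ Finset.range (N / 8 + 1), a i := by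
    simpa using Finset.card_nsmul_le_sum (Finset.range (N / 8 + 1)) a (-1) fun i _ ↦ ha i
  have htail : ((N - (N / 8 + 1) : ℕ) : ℝ) * (3 / 4) ≤ ∑ i ∈ Finset.Ico (N / 8 + 1) N, a i := by
    simpa using Finset.card_nsmul_le_sum (Finset.Ico (N / 8 + 1) N) a (3 / 4) fun i hi ↦ by
      rw [Finset.mem_Ico] at hi
      exact ha' i hi.2 (by omega)
  rw [inv_mul_eq_div, le_div_iff₀ (by linarith),
    ← Finset.sum_range_add_sum_Ico a (by omega : N / 8 + 1 ≤ N)]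
  push_cast [Nat.cast_sub (by omega : N / 8 + 1 ≤ N)] at hhead htail
  linarith

theorem integral_empT3 (f : T3 → T3) (x : T3) {n : ℕ} (hn : n ≠ 0)
    (φ : BoundedContinuousFunction T3 ℝ) :
    ∫ p, φ p ∂(empT3 f x n : Measure T3) = (n : ℝ)⁻¹ * ∑ i ∈ Finset.range n, φ (f^[i] x) := by
  have hemp : (empT3 f x n : Measure T3) = empMeasT3 f x n := by simp [empT3, hn]
  rw [hemp, empMeasT3, integral_smul_measure,
    integral_finsetSum_measure fun i _ ↦ φ.integrable _]
  simp [integral_dirac]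

theorem not_exists_tendsto_empT3 {f : T3 → T3} {x : T3} (φ : BoundedContinuousFunction T3 ℝ)
    {a b : ℝ} (hab : a < b)
    (ha : ∃ᶠ n : ℕ in atTop, (n : ℝ)⁻¹ * ∑ i ∈ Finset.range n, φ (f^[i] x) ≤ a)
    (hb : ∃ᶠ n : ℕ in atTop, b ≤ (n : ℝ)⁻¹ * ∑ i ∈ Finset.range n, φ (f^[i] x)) :
    ¬ ∃ μ : ProbabilityMeasure T3, Tendsto (fun n ↦ empT3 f x n) atTop (𝓝 μ) := by
  rintro ⟨μ, hμ⟩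
  have hlim : Tendsto (fun n : ℕ ↦ (n : ℝ)⁻¹ * ∑ i ∈ Finset.range n, φ (f^[i] x)) atTop
      (𝓝 (∫ p, φ p ∂(μ : Measure T3))) :=
    (ProbabilityMeasure.tendsto_iff_forall_integral_tendsto.1 hμ φ).congr' <|
      (eventually_ne_atTop 0).mono fun n hn ↦ integral_empT3 f x hn φ
  exact (hab.trans_le (ge_of_tendsto_of_frequently hlim hb)).not_ge
    (le_of_tendsto_of_frequently hlim ha)

end Average

section Oscillation

/-- The powers of `w` along the frequencies `q` return infinitely often near `1` and near `-1`,
so that the phases of the dominant terms of the Birkhoff sums take both signs. -/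
def Oscillates (q : ℕ → ℕ) (w : Circle) : Prop :=
  ∀ σ : ℝ, |σ| = 1 → ∃ᶠ k in atTop, 1 / 2 ≤ σ * ((w : ℂ) ^ q k).re

variable {lam kap : Circle} {q : ℕ → ℕ} (h : IsFastRotation lam kap q)
include h

theorem IsFastRotation.le_floor_inv (k : ℕ) : 256 * q k ≤ ⌊(4 * ‖(lam : ℂ) ^ q k - 1‖)⁻¹⌋₊ := by
  have hρ := h.norm_pos k
  refine Nat.le_floor ?_
  rw [le_inv_comm₀ (by simp [h.pos]) (by positivity), ← one_div,
    le_div_iff₀ (by simp [h.pos])]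
  push_cast
  linarith [h.norm_pow_mul_norm_le k, weight_le_one (q k)]

omit h in
theorem skewProduct_iterate_re (n : ℕ) (w y z : Circle) :
    (((skewProduct lam kap q)^[n] (w, y, z)).2.2 : ℂ).re =
      (northSouth (birkhoffSum (lam * ·) (cocycle q) n w) z : ℂ).re := by
  rw [skewProduct_iterate]
  rcases neg_one_pow_eq_or ℤ n with hn | hn
  · rw [hn, zpow_one]
  · simp [hn, northSouth_inv]

theorem frequently_half_le_average {w : Circle} (hw : Oscillates q w) (y : Circle) {z : Circle}
    (hz : (z : ℂ).im ≠ 0) {σ : ℝ} (hσ : |σ| = 1) :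
    ∃ᶠ N : ℕ in atTop, 1 / 2 ≤ (N : ℝ)⁻¹ *
      ∑ i ∈ Finset.range N, σ * (((skewProduct lam kap q)^[i] (w, y, z)).2.2 : ℂ).re := by
  obtain ⟨T, hT⟩ := exists_forall_le_mul_northSouth_re hz (eq_or_eq_neg_of_abs_eq hσ)
    (by norm_num : (3 / 4 : ℝ) ∈ Set.Ioo (-1) 1)
  have hqtop : Tendsto (fun k ↦ (q k : ℝ)) atTop atTop :=
    tendsto_natCast_atTop_atTop.comp h.strictMono.tendsto_atTop
  set N : ℕ → ℕ := fun k ↦ ⌊(4 * ‖(lam : ℂ) ^ q k - 1‖)⁻¹⌋₊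
  have hN : ∀ k, 256 * q k ≤ N k := h.le_floor_inv
  have hNtop : Tendsto N atTop atTop :=
    tendsto_atTop_mono (fun k ↦ (Nat.le_mul_of_pos_left _ (by norm_num)).trans (hN k))
      h.strictMono.tendsto_atTop
  refine hNtop.frequently (((hw σ hσ).and_eventually (hqtop.eventually_ge_atTop T)).mono ?_)
  rintro k ⟨hk, hTk⟩
  have hρ := h.norm_pos k
  have hNρ : N k * (4 * ‖(lam : ℂ) ^ q k - 1‖) ≤ 1 :=
    (le_div_iff₀ (by positivity)).1 ((Nat.floor_le (by positivity)).trans_eq (one_div _).symm)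
  have hNρ' : 1 < (N k + 1) * (4 * ‖(lam : ℂ) ^ q k - 1‖) :=
    (inv_lt_iff_one_lt_mul₀ (by positivity)).1 (Nat.lt_floor_add_one _)
  refine half_le_average (by linarith [hN k, h.pos k]) (fun i ↦ ?_) fun i hi hi' ↦ ?_
  · refine neg_le_of_abs_le ?_
    rw [abs_mul, hσ, one_mul]
    exact abs_re_circle_le_one _
  · have hiN : (i : ℝ) ≤ N k := mod_cast hi.le
    have hNi : (N k : ℝ) + 1 ≤ 8 * i := mod_cast hi'
    rw [skewProduct_iterate_re]
    refine hT _ (hTk.trans (h.le_mul_birkhoffSum hσ.le hk ?_ ?_))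
    · nlinarith
    · nlinarith

end Oscillation

section Density

theorem exists_abs_sub_lt_of_le_of_le {a : ℕ → ℝ} {ε r : ℝ} {M : ℕ} (h₀ : a 0 ≤ r)
    (hM : r ≤ a M) (hε : 0 < ε) (hstep : ∀ m, |a (m + 1) - a m| < ε) :
    ∃ m ≤ M, |a m - r| < ε := by
  classical
  have hex : ∃ m, r ≤ a m := ⟨M, hM⟩
  refine ⟨Nat.find hex, Nat.find_min' hex hM, ?_⟩
  have hle : r ≤ a (Nat.find hex) := Nat.find_spec hex
  rcases hm : Nat.find hex with - | m
  · rw [hm] at hle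
    rwa [le_antisymm h₀ hle, sub_self, abs_zero]
  · have hlt : a m < r := not_le.1 (Nat.find_min hex (hm ▸ m.lt_succ_self))
    rw [hm] at hle
    rw [abs_of_nonneg (sub_nonneg.2 hle)]
    linarith [(abs_lt.1 (hstep m)).2]

theorem dist_circle_mul_self (a b : Circle) : dist (a * b) b = ‖(a : ℂ) - 1‖ := by
  have hdist : dist (a * b) b = ‖(a : ℂ) * b - b‖ := dist_eq_norm (a * b : ℂ) b
  rw [hdist, ← sub_one_mul, norm_mul, Circle.norm_coe, mul_one]

variable {lam kap : Circle} {q : ℕ → ℕ} (h : IsFastRotation lam kap q)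
include h

theorem IsFastRotation.dist_pow_mul_self_le (m k : ℕ) (b : Circle × Circle) :
    dist ((lam, kap) ^ (m * q k) * b) b ≤ m * ‖(lam : ℂ) ^ q k - 1‖ := by
  rw [Prod.dist_eq, max_le_iff]
  constructor
  · refine (dist_circle_mul_self _ _).trans_le ?_
    simpa [mul_comm m, pow_mul] using
      norm_pow_sub_one_le (z := (lam : ℂ) ^ q k) (by simp [Circle.norm_coe]) m
  · refine (dist_circle_mul_self _ _).trans_le (le_trans ?_
      (mul_le_mul_of_nonneg_left (h.norm_snd_le k) m.cast_nonneg))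
    simpa [mul_comm m, pow_mul] using
      norm_pow_sub_one_le (z := (kap : ℂ) ^ q k) (by simp [Circle.norm_coe]) m

theorem exists_excursion {O : Set (Circle × Circle)} (hO : IsOpen O) {w y : Circle}
    (hwy : (w, y) ∈ O) (hw : Oscillates q w) {σ : ℝ} (hσ : |σ| = 1) (r : ℝ) {ε : ℝ} (hε : 0 < ε) :
    ∃ s M : ℕ, Even s ∧ (∀ m ≤ M, (lam, kap) ^ (m * s) * (w, y) ∈ O) ∧
      (∀ u, |birkhoffSum (lam * ·) (cocycle q) s u| < ε) ∧
      r ≤ σ * birkhoffSum (lam * ·) (cocycle q) (M * s) w := by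
  obtain ⟨δ, hδ, hball⟩ := Metric.isOpen_iff.1 hO _ hwy
  have hqtop : Tendsto (fun k ↦ (q k : ℝ)) atTop atTop :=
    tendsto_natCast_atTop_atTop.comp h.strictMono.tendsto_atTop
  have hpow : Tendsto (fun k ↦ 3 * (1 / 2 : ℝ) ^ q k) atTop (𝓝 0) := by
    simpa [Function.comp_def] using ((tendsto_pow_atTop_nhds_zero_of_lt_one
      (r := (1 / 2 : ℝ)) (by norm_num) (by norm_num)).comp
      h.strictMono.tendsto_atTop).const_mul (3 : ℝ)
  obtain ⟨k, hk, hkr, hkδ, hkε⟩ := ((hw σ hσ).and_eventually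
    ((hqtop.eventually_ge_atTop r).and ((hqtop.eventually_gt_atTop (1 / δ)).and
      (hpow.eventually_lt_const hε)))).exists
  have hρ := h.norm_pos k
  have hq : (1 : ℝ) ≤ q k := mod_cast h.pos k
  set M := ⌊1 / (8 * q k * ‖(lam : ℂ) ^ q k - 1‖)⌋₊
  have hM : M * (8 * q k * ‖(lam : ℂ) ^ q k - 1‖) ≤ 1 :=
    (le_div_iff₀ (by positivity)).1 (Nat.floor_le (by positivity))
  have hM' : 1 < (M + 1) * (8 * q k * ‖(lam : ℂ) ^ q k - 1‖) :=
    (div_lt_iff₀ (by positivity)).1 (Nat.lt_floor_add_one _)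
  refine ⟨q k, M, h.even k, fun m hm ↦ hball ((h.dist_pow_mul_self_le m k _).trans_lt ?_),
    fun u ↦ (h.abs_birkhoffSum_period_le k u).trans_lt hkε,
    hkr.trans (h.le_mul_birkhoffSum hσ.le hk ?_ ?_)⟩
  · rw [div_lt_iff₀ hδ] at hkδ
    have hmM : (m : ℝ) ≤ M := mod_cast hm
    have hdisp : q k * (m * ‖(lam : ℂ) ^ q k - 1‖) ≤ 1 := by
      have hle : m * ‖(lam : ℂ) ^ q k - 1‖ ≤ M * ‖(lam : ℂ) ^ q k - 1‖ := by gcongr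
      nlinarith [mul_le_mul_of_nonneg_left hle (q k).cast_nonneg]
    exact lt_of_mul_lt_mul_left (hdisp.trans_lt hkδ) (by positivity)
  · push_cast
    linarith [h.norm_pow_mul_norm_le k, weight_le_one (q k)]
  · push_cast
    linarith

theorem IsFastRotation.denseRange_pow_add_mul (e : ℕ) (b : Circle × Circle) :
    DenseRange fun m : ℕ ↦ (lam, kap) ^ (e + 2 * m) * b := by
  have hmul : DenseRange fun c : Circle × Circle ↦ c * ((lam, kap) ^ e * b) :=
    (Homeomorph.mulRight _).surjective.denseRange
  convert hmul.comp h.denseRange (by fun_prop) using 2 with m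
  rw [add_comm, pow_add, mul_assoc]
  rfl

theorem denseRange_pow_mul_birkhoffSum {w : Circle} (hw : ∀ n : ℕ, Oscillates q (lam ^ n * w))
    (y : Circle) (e : ℕ) :
    DenseRange fun m : ℕ ↦ ((lam, kap) ^ (e + 2 * m) * (w, y),
      birkhoffSum (lam * ·) (cocycle q) (e + 2 * m) w) := by
  rw [DenseRange, Metric.dense_iff]
  rintro ⟨b, r⟩ ε hε
  obtain ⟨m₀, hm₀⟩ := (h.denseRange_pow_add_mul e (w, y)).exists_mem_open
    Metric.isOpen_ball ⟨b, Metric.mem_ball_self hε⟩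
  set n₀ := e + 2 * m₀
  set s₀ := birkhoffSum (lam * ·) (cocycle q) n₀ w
  obtain ⟨σ, hσ, hσr⟩ : ∃ σ : ℝ, |σ| = 1 ∧ σ * s₀ ≤ σ * r := by
    rcases le_total s₀ r with hle | hle
    · exact ⟨1, by simp, by simpa⟩
    · exact ⟨-1, by simp, by simpa⟩
  obtain ⟨s, M, ⟨p, rfl⟩, hbaseM, hstep, hend⟩ :=
    exists_excursion h (w := lam ^ n₀ * w) (y := kap ^ n₀ * y) Metric.isOpen_ball hm₀ (hw n₀) hσ
      (σ * r - σ * s₀) hε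
  set S : ℕ → ℝ := fun m ↦ birkhoffSum (lam * ·) (cocycle q) (m * (p + p)) (lam ^ n₀ * w)
  obtain ⟨m, hmM, hm⟩ := exists_abs_sub_lt_of_le_of_le (a := fun m ↦ σ * (s₀ + S m)) (r := σ * r)
    (M := M) (by simpa [S] using hσr) (by rw [mul_add]; linarith) hε fun m ↦ by
      rw [← mul_sub, abs_mul, hσ, one_mul, add_sub_add_left_eq_sub]
      simpa [S, add_mul, birkhoffSum_add] using hstep _
  have hn : e + 2 * (m₀ + m * p) = n₀ + m * (p + p) := by ring
  refine ⟨_, ?_, m₀ + m * p, rfl⟩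
  simp only [Metric.mem_ball, Prod.dist_eq, max_lt_iff, hn]
  constructor
  · simpa [add_comm n₀, pow_add, mul_assoc, Prod.dist_eq] using hbaseM m hmM
  · rw [birkhoffSum_add, mul_left_iterate, Real.dist_eq]
    rwa [← mul_sub, abs_mul, hσ, one_mul] at hm

end Density

section FullMeasure

theorem ae_im_ne_zero (μ : Measure Circle) [μ.IsHaarMeasure] :
    ∀ᵐ z : Circle ∂μ, (z : ℂ).im ≠ 0 := by
  have hsub : {z : Circle | ¬ (z : ℂ).im ≠ 0} ⊆ {1, -1} := fun z hz ↦ by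
    have him : (z : ℂ).im = 0 := not_not.1 hz
    have hre := re_sq_add_im_sq_circle z
    rw [him] at hre
    rcases (by simpa using hre : (z : ℂ).re = 1 ∨ (z : ℂ).re = -1) with h | h
    · exact .inl (Circle.ext (Complex.ext h him))
    · exact .inr (Circle.ext (Complex.ext (by simpa using h) (by simpa using him)))
  exact ae_iff.2 (((Set.toFinite _).subset hsub).measure_zero μ)

theorem ae_oscillates {q : ℕ → ℕ} (hdvd : ∀ k, q k ∣ q (k + 1)) (hq : Tendsto q atTop atTop)
    (μ : Measure Circle) [μ.IsHaarMeasure] : ∀ᵐ w ∂μ, Oscillates q w := by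
  have hae : ∀ σ : ℝ, |σ| = 1 → ∀ᵐ w : Circle ∂μ, ∃ᶠ k in atTop,
      1 / 2 ≤ σ * ((w : ℂ) ^ q k).re := by
    intro σ hσ
    have hopen : IsOpen {u : Circle | 1 / 2 < σ * (u : ℂ).re} :=
      isOpen_lt continuous_const (by fun_prop)
    have hne : {u : Circle | 1 / 2 < σ * (u : ℂ).re}.Nonempty := by
      rcases eq_or_eq_neg_of_abs_eq hσ with rfl | rfl
      · exact ⟨1, by norm_num⟩
      · exact ⟨-1, by norm_num⟩
    filter_upwards [ae_frequently_pow_mem hdvd hq μ hopen hne] with w hw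
    exact hw.mono fun k hk ↦ le_of_lt hk
  filter_upwards [hae 1 (by simp), hae (-1) (by simp)] with w hw hw' σ hσ
  rcases eq_or_eq_neg_of_abs_eq hσ with rfl | rfl
  · exact hw
  · exact hw'

variable {lam kap : Circle} {q : ℕ → ℕ} (h : IsFastRotation lam kap q)
include h

theorem exists_skewProduct_iterate_mem {w : Circle} (hw : ∀ n : ℕ, Oscillates q (lam ^ n * w))
    (y : Circle) {z : Circle} (hz : (z : ℂ).im ≠ 0) {W : Set T3} (hW : IsOpen W) {x : T3}
    (hxW : x ∈ W) (hx : (x.2.2 : ℂ).im ≠ 0) :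
    ∃ n, (skewProduct lam kap q)^[n] (w, y, z) ∈ W := by
  obtain ⟨e, he⟩ : ∃ e : ℕ, 0 < ((z ^ (-1 : ℤ) ^ e : Circle) : ℂ).im * (x.2.2 : ℂ).im := by
    rcases (mul_ne_zero hz hx).lt_or_gt with hneg | hpos
    · exact ⟨1, by simpa [Complex.inv_im] using hneg⟩
    · exact ⟨0, by simpa using hpos⟩
  obtain ⟨r, hr⟩ := exists_northSouth_eq he
  have hflow : Continuous fun t ↦ northSouth t (z ^ (-1 : ℤ) ^ e) :=
    (contMDiff_northSouth (n := 0) (I := 𝓘(ℝ)) contMDiff_id contMDiff_const).continuous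
  have hcont : Continuous fun p : (Circle × Circle) × ℝ ↦
      ((p.1.1, p.1.2, northSouth p.2 (z ^ (-1 : ℤ) ^ e)) : T3) := by fun_prop
  obtain ⟨m, hm⟩ := (denseRange_pow_mul_birkhoffSum h hw y e).exists_mem_open
    (hW.preimage hcont) ⟨((x.1, x.2.1), r), by simpa [hr] using hxW⟩
  refine ⟨e + 2 * m, ?_⟩
  simpa [skewProduct_iterate, pow_add, pow_mul] using hm

theorem dense_orbit_skewProduct {w : Circle} (hw : ∀ n : ℕ, Oscillates q (lam ^ n * w))
    (y : Circle) {z : Circle} (hz : (z : ℂ).im ≠ 0) :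
    Dense (Set.range fun n : ℕ ↦ (skewProduct lam kap q)^[n] (w, y, z)) := by
  have him : Dense {x : T3 | (x.2.2 : ℂ).im ≠ 0} :=
    ((Measure.haar : Measure Circle).dense_of_ae (ae_im_ne_zero _)).preimage
      (isOpenMap_snd.comp isOpenMap_snd)
  refine dense_iff_inter_open.2 fun W hW hne ↦ ?_
  obtain ⟨x, hxW, hx⟩ := him.inter_open_nonempty W hW hne
  obtain ⟨n, hn⟩ := exists_skewProduct_iterate_mem h hw y hz hW hxW hx
  exact ⟨_, hn, n, rfl⟩

theorem not_exists_tendsto_empT3_skewProduct {w : Circle} (hw : Oscillates q w) (y : Circle)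
    {z : Circle} (hz : (z : ℂ).im ≠ 0) :
    ¬ ∃ μ : ProbabilityMeasure T3,
      Tendsto (fun n : ℕ ↦ empT3 (skewProduct lam kap q) (w, y, z) n) atTop (𝓝 μ) := by
  refine not_exists_tendsto_empT3
    (.mkOfCompact ⟨fun x : T3 ↦ (x.2.2 : ℂ).re, by fun_prop⟩) (a := -1 / 2) (b := 1 / 2)
    (by norm_num) ?_ ?_
  · refine (frequently_half_le_average h hw y hz (σ := -1) (by simp)).mono fun n hn ↦ ?_
    simp only [neg_one_mul, Finset.sum_neg_distrib, mul_neg] at hn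
    exact (le_neg_of_le_neg hn).trans_eq (neg_div _ _).symm
  · simpa using frequently_half_le_average h hw y hz (σ := 1) (by simp)

theorem ae_dense_orbit_and_not_exists_tendsto :
    ∀ᵐ x ∂LebT3, Dense (Set.range fun n : ℕ ↦ (skewProduct lam kap q)^[n] x) ∧
      ¬ ∃ μ : ProbabilityMeasure T3,
        Tendsto (fun n : ℕ ↦ empT3 (skewProduct lam kap q) x n) atTop (𝓝 μ) := by
  have hhaar : (LebT3.map Prod.fst).IsHaarMeasure := Measure.isHaarMeasure_map_of_isFiniteMeasure
    LebT3 (MonoidHom.fst Circle (Circle × Circle)) continuous_fst Prod.fst_surjective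
  have hhaar' : (LebT3.map fun x ↦ x.2.2).IsHaarMeasure :=
    Measure.isHaarMeasure_map_of_isFiniteMeasure LebT3
      ((MonoidHom.snd Circle Circle).comp (MonoidHom.snd Circle (Circle × Circle)))
      (continuous_snd.comp continuous_snd) (Prod.snd_surjective.comp Prod.snd_surjective)
  have hosc := ae_oscillates h.dvd_succ h.strictMono.tendsto_atTop (LebT3.map Prod.fst)
  have hosc' : ∀ᵐ w ∂LebT3.map Prod.fst, ∀ n : ℕ, Oscillates q (lam ^ n * w) :=
    ae_all_iff.2 fun n ↦ (measurePreserving_mul_left _ (lam ^ n)).quasiMeasurePreserving.ae hosc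
  filter_upwards [ae_of_ae_map continuous_fst.aemeasurable hosc',
    ae_of_ae_map (by fun_prop) (ae_im_ne_zero (LebT3.map fun x ↦ x.2.2))] with ⟨w, y, z⟩ hw hz
  exact ⟨dense_orbit_skewProduct h hw y hz,
    not_exists_tendsto_empT3_skewProduct h (by simpa using hw 0) y hz⟩

end FullMeasure

theorem exists_smooth_diffeo_torus3_historical_general (m : WithTop ℕ∞) :
    ∃ f : Diffeomorph modelT3 modelT3 T3 T3 m,
      (∀ᵐ x ∂LebT3,
        Dense (Set.range fun n : ℕ => (⇑f)^[n] x) ∧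
        ¬ ∃ μ : ProbabilityMeasure T3,
            Tendsto (fun n : ℕ => empT3 (⇑f) x n) atTop (𝓝 μ)) ∧
      (∃ x : T3, Dense (Set.range fun n : ℕ => (⇑f)^[n] x)) ∧
      ¬ ∃ μ : ProbabilityMeasure T3,
          Measure.map (⇑f) (μ : Measure T3) = (μ : Measure T3) ∧
          0 < LebT3 {x : T3 | Tendsto (fun n : ℕ => empT3 (⇑f) x n) atTop (𝓝 μ)} := by
  obtain ⟨lam, kap, q, h⟩ := exists_isFastRotation
  have hae := ae_dense_orbit_and_not_exists_tendsto h
  refine ⟨skewProductDiffeomorph lam kap h.strictMono m, hae,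
    hae.exists.imp fun _ hx ↦ hx.1, ?_⟩
  rintro ⟨μ, -, hpos⟩
  refine hpos.ne' (measure_mono_null ?_ (ae_iff.1 hae))
  intro x hx hgood
  exact hgood.2 ⟨μ, hx⟩

/-- There exists a `C^∞` diffeomorphism `f` of the 3-torus such that
Lebesgue (Haar) almost every point `x` has a dense forward orbit and a non-convergent
sequence of empirical measures (in the weak topology on Borel probability measures).
In particular `f` is transitive and has no physical measure. -/
theorem exists_smooth_diffeo_torus3_historical :
    ∃ f : Diffeomorph modelT3 modelT3 T3 T3 (⊤ : ℕ∞),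
      (∀ᵐ x ∂LebT3,
        Dense (Set.range fun n : ℕ => (⇑f)^[n] x) ∧
        ¬ ∃ μ : ProbabilityMeasure T3,
            Tendsto (fun n : ℕ => empT3 (⇑f) x n) atTop (𝓝 μ)) ∧
      (∃ x : T3, Dense (Set.range fun n : ℕ => (⇑f)^[n] x)) ∧
      ¬ ∃ μ : ProbabilityMeasure T3,
          Measure.map (⇑f) (μ : Measure T3) = (μ : Measure T3) ∧
          0 < LebT3 {x : T3 | Tendsto (fun n : ℕ => empT3 (⇑f) x n) atTop (𝓝 μ)} :=
  exists_smooth_diffeo_torus3_historical_general _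

end
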